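/- For a square matrix A over a field of characteristic 0 and any k ≥ 1, the trace of the induced map on the k-th exterior power satisfies the recursion tr(∧^k A) = (1/k) · Σ_{m=1}^{k} (-1)^{m-1} tr(A^m) · tr(∧^{k-m} A), with the convention tr(∧^0 A) = 1. -/

import Mathlib

/-!
Put `P = det (1 + X A)`. The trace of `∧^k A`, computed in the basis of `k`-fold wedge products of
standard basis vectors, is the sum of the principal `k × k` minors of `A`, that is, the coefficient
of `X^k` in `P` (`trace_extPowerMap_toLin'`). The recursion is therefore a Newton identity for the
coefficients of `P`, and it is obtained without eigenvalues. Let `B` be the adjugate of `1 + X A` and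
`T_j = tr (A^j B)`. Jacobi's formula (`derivative_det_eq_trace`) gives `P' = T_1`, and
`(1 + X A) B = P` gives `T_j + X T_{j+1} = tr (A^j) P`, which determines the coefficients of `T_1` in
terms of those of `P` (`coeff_trace_pow_mul_adjugate`). Comparing coefficients of `X^(k-1)` in
`P' = T_1` gives `k` times the claim, over any commutative ring; characteristic `0` serves only to
divide by `k`.
-/

open ExteriorAlgebra

/-- The induced map on the `n`-th exterior power of an endomorphism. -/
noncomputable def extPowerMap {R M : Type*} [CommRing R] [AddCommGroup M] [Module R M]
    (n : ℕ) (f : M →ₗ[R] M) : (⋀[R]^n M) →ₗ[R] (⋀[R]^n M) :=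
  (ExteriorAlgebra.map f).toLinearMap.restrict (p := ⋀[R]^n M) (q := ⋀[R]^n M)
    (by
      intro x hx
      rw [← ExteriorAlgebra.ιMulti_span_fixedDegree R n] at hx ⊢
      refine Submodule.span_induction (p := fun y _ => (ExteriorAlgebra.map f).toLinearMap y ∈
        Submodule.span R (Set.range (ιMulti R n))) ?_ ?_ ?_ ?_ hx
      · rintro y ⟨v, rfl⟩
        simp only [AlgHom.toLinearMap_apply, ExteriorAlgebra.map_apply_ιMulti]
        exact Submodule.subset_span ⟨fun i => f (v i), rfl⟩
      · simp only [map_zero]; exact Submodule.zero_mem _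
      · intro y z _ _ hy hz
        simp only [map_add]; exact Submodule.add_mem _ hy hz
      · intro r y _ hy
        simp only [map_smul]; exact Submodule.smul_mem _ _ hy)

open Polynomial in
/-- **Jacobi's formula** for the formal derivative of the determinant of a polynomial matrix. -/
theorem derivative_det_eq_trace {R ι : Type*} [CommRing R] [Fintype ι] [DecidableEq ι]
    (M : Matrix ι ι R[X]) :
    derivative M.det = (M.map derivative * M.adjugate).trace := by
  have h : ∀ i, (M.updateCol i (fun j => derivative (M j i))).det =
      ∑ j, M.adjugate i j * derivative (M j i) := by
    intro i
    rw [← Matrix.cramer_apply, Matrix.cramer_eq_adjugate_mulVec]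
    rfl
  rw [Matrix.trace_mul_comm]
  simp only [Matrix.trace, Matrix.diag, Matrix.mul_apply, Matrix.map_apply]
  rw [← Finset.sum_congr rfl (fun i _ => h i)]
  simp only [Matrix.det_apply', derivative_sum]
  rw [Finset.sum_comm]
  refine Finset.sum_congr rfl fun σ _ => ?_
  rw [← map_intCast (C : R →+* R[X]), derivative_C_mul, derivative_prod_finset, Finset.mul_sum]
  refine Finset.sum_congr rfl fun i _ => ?_
  rw [← Finset.prod_erase_mul _ _ (Finset.mem_univ i), Matrix.updateCol_self]
  congr 2
  refine Finset.prod_congr rfl fun j hj => ?_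
  rw [Matrix.updateCol_ne (Finset.ne_of_mem_erase hj)]

open Polynomial in
/-- Solving `T_j + X T_{j+1} = tr (A^j) P` for the coefficients of `T_j = tr (A^j B)`, where
`P = det (1 + X A)` and `B` is the adjugate of `1 + X A`. -/
theorem coeff_trace_pow_mul_adjugate {R ι : Type*} [CommRing R] [Fintype ι] [DecidableEq ι]
    (A : Matrix ι ι R) (d j : ℕ) :
    ((A.map C ^ j * (1 + (X : R[X]) • A.map C).adjugate).trace).coeff d =
      ∑ m ∈ Finset.range (d + 1), (-1) ^ m * (A ^ (j + m)).trace *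
        ((1 + (X : R[X]) • A.map C).det).coeff (d - m) := by
  have key : ∀ j, (A.map C ^ j * (1 + (X : R[X]) • A.map C).adjugate).trace =
      C (A ^ j).trace * (1 + (X : R[X]) • A.map C).det -
        X * (A.map C ^ (j + 1) * (1 + (X : R[X]) • A.map C).adjugate).trace := by
    intro j
    have h := congrArg (fun N => (A.map C ^ j * N).trace)
      (Matrix.mul_adjugate (1 + (X : R[X]) • A.map C))
    have ht : (A.map C ^ j).trace = C (A ^ j).trace := by
      rw [AddMonoidHom.map_trace (C : R →+* R[X]), ← RingHom.mapMatrix_apply,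
        ← RingHom.mapMatrix_apply, map_pow]
    simp only [add_mul, one_mul, mul_add, Matrix.trace_add, Matrix.smul_mul, Matrix.mul_smul,
      Matrix.trace_smul, smul_eq_mul, mul_one, ht] at h
    rw [pow_succ, mul_assoc, eq_sub_iff_add_eq, h, mul_comm]
  induction d generalizing j with
  | zero => rw [key]; simp
  | succ d ih =>
    rw [key, coeff_sub, coeff_C_mul, coeff_X_mul, ih, Finset.sum_range_succ' _ (d + 1),
      sub_eq_add_neg, add_comm, ← Finset.sum_neg_distrib]
    congr 1
    · refine Finset.sum_congr rfl fun m _ => ?_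
      rw [Nat.add_sub_add_right, pow_succ, show j + 1 + m = j + (m + 1) by ring]
      ring
    · simp

open Polynomial in
/-- Newton's identity for the coefficients of `det (1 + X A)`, with the traces of the powers of `A`
as power sums. -/
theorem succ_mul_coeff_det_one_add_X_smul {R ι : Type*} [CommRing R] [Fintype ι] [DecidableEq ι]
    (A : Matrix ι ι R) (d : ℕ) :
    ((d : R) + 1) * ((1 + (X : R[X]) • A.map C).det).coeff (d + 1) =
      ∑ m ∈ Finset.range (d + 1), (-1) ^ m * (A ^ (m + 1)).trace *
        ((1 + (X : R[X]) • A.map C).det).coeff (d - m) := by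
  have hder : (1 + (X : R[X]) • A.map C).map derivative = A.map C := by
    ext1 i j
    by_cases hij : i = j <;> simp [hij]
  have h := coeff_trace_pow_mul_adjugate A d 1
  rw [pow_one] at h
  nth_rw 1 [← hder] at h
  rw [← derivative_det_eq_trace, coeff_derivative] at h
  rw [mul_comm, h]
  simp only [add_comm 1]

open Polynomial in
/-- In the basis of wedge products of standard basis vectors, the diagonal entries of `∧^k A` are
the principal `k × k` minors of `A`, whose sum is a coefficient of `det (1 + X A)`. -/
theorem trace_extPowerMap_toLin' {R : Type*} [CommRing R] {n : ℕ}
    (A : Matrix (Fin n) (Fin n) R) (k : ℕ) :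
    LinearMap.trace R (⋀[R]^k (Fin n → R)) (extPowerMap k (Matrix.toLin' A)) =
      ((1 + (X : R[X]) • A.map C).det).coeff k := by
  have hmap : extPowerMap k (Matrix.toLin' A) = exteriorPower.map k (Matrix.toLin' A) := by
    apply exteriorPower.linearMap_ext
    ext v
    simp [extPowerMap, LinearMap.restrict_apply, ExteriorAlgebra.map_apply_ιMulti, Function.comp_def]
  rw [Matrix.coeff_det_one_add_X_smul_eq_sum_minors, hmap,
    LinearMap.trace_eq_matrix_trace R ((Pi.basisFun R (Fin n)).exteriorPower k), Matrix.trace]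
  have hmem : ∀ s : Finset (Fin n), s ∈ Finset.univ.powersetCard k ↔
      s ∈ Set.powersetCard (Fin n) k := by
    simp
  rw [Finset.sum_subtype _ hmem]
  refine Finset.sum_congr rfl fun s _ => ?_
  -- The coordinate form gives the transposed minor, indexed by `Fin k` through the increasing
  -- enumeration of `s`.
  rw [Matrix.diag_apply, LinearMap.toMatrix_apply, exteriorPower.basis_apply,
    exteriorPower.map_apply_ιMulti_family, exteriorPower.basis_repr_apply,
    exteriorPower.ιMulti_family, exteriorPower.ιMultiDual_apply_ιMulti,
    ← Matrix.det_transpose,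
    ← Matrix.det_submatrix_equiv_self (s.val.orderIsoOfFin s.prop).toEquiv]
  congr 1
  ext i j
  simp [Set.powersetCard.ofFinEmbEquiv_symm_apply]
  rfl

/-- For a square matrix `A` over a field of characteristic `0` and `k ≥ 1`,
`tr(∧^k A) = (1/k) ∑_{m=1}^{k} (-1)^(m-1) tr(A^m) tr(∧^{k-m} A)`, where
`tr(∧^j A)` denotes the trace of the induced endomorphism of the `j`-th exterior power
(with `tr(∧^0 A) = 1` automatically, the zeroth exterior power being one-dimensional). -/
theorem trace_exteriorPower_recursion
    {K : Type*} [Field K] [CharZero K] {n : ℕ} (A : Matrix (Fin n) (Fin n) K)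
    (k : ℕ) (hk : 1 ≤ k) :
    LinearMap.trace K (⋀[K]^k (Fin n → K)) (extPowerMap k (Matrix.toLin' A)) =
      (k : K)⁻¹ * ∑ m ∈ Finset.Icc 1 k,
        (-1 : K) ^ (m - 1) * (A ^ m).trace *
          LinearMap.trace K (⋀[K]^(k - m) (Fin n → K)) (extPowerMap (k - m) (Matrix.toLin' A)) := by
  obtain ⟨d, rfl⟩ := Nat.exists_eq_add_of_le' hk
  have hd : ((d + 1 : ℕ) : K) ≠ 0 := Nat.cast_ne_zero.mpr d.succ_ne_zero
  simp only [trace_extPowerMap_toLin']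
  rw [eq_inv_mul_iff_mul_eq₀ hd, Nat.cast_succ, succ_mul_coeff_det_one_add_X_smul,
    Finset.range_eq_Ico, ← Finset.Ico_add_one_right_eq_Icc, Finset.sum_Ico_eq_sum_range,
    Finset.sum_Ico_eq_sum_range]
  refine Finset.sum_congr (by simp) fun m _ => ?_
  rw [show d + 1 - (1 + m) = d - m by lia, add_comm 1 m, Nat.add_sub_cancel, zero_add]
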